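/- Let Ω₁ ⊆ ℝ^p and Ω₂ ⊆ ℝ^q (p, q ≥ 2) be bounded connected open sets, and let u(x,y) be a separately subharmonic function on a neighborhood of the closure of Ω₁ × Ω₂. If u ≤ M on the distinguished boundary ∂Ω₁ × ∂Ω₂ for some constant M, then u ≤ M on the closure of Ω₁ × Ω₂. -/

import Mathlib

open MeasureTheory Metric Filter Topology Set

noncomputable section

variable {E : Type*} [NormedAddCommGroup E] [InnerProductSpace ℝ E]
  [MeasurableSpace E] [BorelSpace E]

/-- The mean of an extended-real-valued function over the sphere of center `x`
and radius `r`, with respect to `d`-dimensional Hausdorff measure, defined as the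
infimum of the averages of the truncations `v ⊔ (-n)`. -/
def sphereMean (d : ℝ) (v : E → EReal) (x : E) (r : ℝ) : EReal :=
  ⨅ n : ℕ, ((⨍ y in sphere x r, ((v y) ⊔ (-(n : ℝ) : EReal)).toReal ∂ μH[d] : ℝ) : EReal)

/-- `v : E → [-∞, ∞)` is subharmonic on `U` (with sphere dimension `d = N - 1`):
upper semicontinuous on `U`, `< ∞`, not identically `-∞`, and satisfying the
sub-mean value inequality on spheres of closed balls contained in `U`. -/
def IsSubharmonicOn (d : ℝ) (v : E → EReal) (U : Set E) : Prop :=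
  UpperSemicontinuousOn v U ∧ (∀ x ∈ U, v x < ⊤) ∧ (∃ x ∈ U, v x ≠ ⊥) ∧
    ∀ x r, 0 < r → closedBall x r ⊆ U → v x ≤ sphereMean d v x r

/-- `u : E → (-∞, ∞]` is superharmonic on `U` iff `-u` is subharmonic on `U`. -/
def IsSuperharmonicOn (d : ℝ) (u : E → EReal) (U : Set E) : Prop :=
  IsSubharmonicOn d (fun x => -(u x)) U

/-- A set is polar if it is contained in the `-∞`-set of a function subharmonic
on a neighborhood of it. -/
def IsPolar (d : ℝ) (S : Set E) : Prop :=
  ∃ U : Set E, IsOpen U ∧ S ⊆ U ∧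
    ∃ v : E → EReal, IsSubharmonicOn d v U ∧ ∀ x ∈ S, v x = ⊥

/-- The fine topology: the coarsest topology making every globally defined
subharmonic function continuous. -/
def fineTopology (E : Type*) [NormedAddCommGroup E] [InnerProductSpace ℝ E]
    [MeasurableSpace E] [BorelSpace E] (d : ℝ) : TopologicalSpace E :=
  ⨅ (v : E → EReal) (_ : IsSubharmonicOn d v Set.univ),
    TopologicalSpace.induced v inferInstance

/-- A set `A` is thin at `ζ` if `ζ` is not a fine limit point of `A`. -/
def ThinAt (d : ℝ) (A : Set E) (ζ : E) : Prop :=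
  ζ ∉ @closure E (fineTopology E d) (A \ {ζ})

/-- A real-valued function is harmonic on `U` if it is continuous on `U` and
satisfies the mean value equality on spheres of closed balls contained in `U`. -/
def IsHarmonicOn (d : ℝ) (h : E → ℝ) (U : Set E) : Prop :=
  ContinuousOn h U ∧ ∀ x r, 0 < r → closedBall x r ⊆ U →
    h x = ⨍ y in sphere x r, h y ∂ μH[d]

/-- An open set is Greenian if it carries a positive superharmonic function that
is not harmonic (i.e. a potential-like function exists). -/
def IsGreenian (d : ℝ) (ω : Set E) : Prop :=
  ω.Nonempty ∧ ∃ u : E → EReal, IsSuperharmonicOn d u ω ∧ (∀ x ∈ ω, 0 < u x) ∧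
    ¬ ∃ h : E → ℝ, IsHarmonicOn d h ω ∧ ∀ x ∈ ω, u x = (h x : EReal)

/-- The Perron upper class of a boundary function `f` on `ω`. -/
def upperClass (d : ℝ) (ω : Set E) (f : E → EReal) : Set (E → EReal) :=
  {u | IsSuperharmonicOn d u ω ∧ (∃ c : ℝ, ∀ x ∈ ω, (c : EReal) ≤ u x) ∧
    ∀ ζ ∈ frontier ω, f ζ ≤ Filter.liminf u (nhdsWithin ζ ω)}

/-- The upper Perron–Wiener–Brelot solution of the Dirichlet problem on `ω`
with boundary data `f`. -/
def PWB (d : ℝ) (ω : Set E) (f : E → EReal) (x : E) : EReal :=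
  ⨅ u ∈ upperClass d ω f, u x

/-- A boundary point `ζ` of `ω` is regular for the Dirichlet problem if for every
continuous boundary data the PWB solution attains the boundary value at `ζ`. -/
def IsRegularBoundaryPoint (d : ℝ) (ω : Set E) (ζ : E) : Prop :=
  ζ ∈ frontier ω ∧ ∀ f : E → ℝ, ContinuousOn f (frontier ω) →
    Filter.Tendsto (PWB d ω (fun y => (f y : EReal))) (nhdsWithin ζ ω) (nhds ((f ζ : EReal)))

/-- `A ⊆ ∂ω` is negligible for `ω` if it has harmonic measure zero, harmonic
measure being the PWB solution for the indicator boundary data. -/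
def IsNegligible (d : ℝ) (ω A : Set E) : Prop :=
  ∀ x ∈ ω, PWB d ω (fun y => ((A.indicator (fun _ => (1 : ℝ)) y : ℝ) : EReal)) x = 0


noncomputable instance prodL2MeasurableSpace (p q : ℕ) :
    MeasurableSpace (WithLp 2 (EuclideanSpace ℝ (Fin p) × EuclideanSpace ℝ (Fin q))) := borel _

instance prodL2BorelSpace (p q : ℕ) :
    BorelSpace (WithLp 2 (EuclideanSpace ℝ (Fin p) × EuclideanSpace ℝ (Fin q))) := ⟨rfl⟩

/-- The product `ℝ^p × ℝ^q` with its Euclidean (L²) structure. -/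
abbrev ProdSpace (p q : ℕ) := WithLp 2 (EuclideanSpace ℝ (Fin p) × EuclideanSpace ℝ (Fin q))

/-- The point `(a, b)` of `ℝ^p × ℝ^q`. -/
def prodMk {p q : ℕ} (a : EuclideanSpace ℝ (Fin p)) (b : EuclideanSpace ℝ (Fin q)) :
    ProdSpace p q := (WithLp.equiv 2 _).symm (a, b)

/-- The product set `Ω₁ × Ω₂` inside `ℝ^p × ℝ^q`. -/
def prodSet {p q : ℕ} (Ω₁ : Set (EuclideanSpace ℝ (Fin p)))
    (Ω₂ : Set (EuclideanSpace ℝ (Fin q))) : Set (ProdSpace p q) :=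
  (WithLp.equiv 2 _) ⁻¹' (Ω₁ ×ˢ Ω₂)

/-- `u` is separately subharmonic on `U ⊆ ℝ^p × ℝ^q` if all its partial functions
are subharmonic on the corresponding slices. -/
def SeparatelySubharmonicOn {p q : ℕ} (u : ProdSpace p q → EReal)
    (U : Set (ProdSpace p q)) : Prop :=
  ∀ a b, prodMk a b ∈ U →
    IsSubharmonicOn ((p : ℝ) - 1) (fun x => u (prodMk x b)) {x | prodMk x b ∈ U} ∧
    IsSubharmonicOn ((q : ℝ) - 1) (fun y => u (prodMk a y)) {y | prodMk a y ∈ U}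
end

theorem hausdorffMeasure_sphere_lt_top {n : ℕ} (x : EuclideanSpace ℝ (Fin (n + 1))) {r : ℝ}
    (hr : 0 < r) : μH[(n : ℝ)] (sphere x r) < ⊤ := by
  let w (i : Fin (n + 1)) (s : ℝ) (t : Fin n → ℝ) : EuclideanSpace ℝ (Fin (n + 1)) :=
    WithLp.toLp 2 (i.insertNth s t)
  let f (i : Fin (n + 1)) (s : ℝ) (t : Fin n → ℝ) : EuclideanSpace ℝ (Fin (n + 1)) :=
    x + r • (‖w i s t‖⁻¹ • w i s t)
  have hw (i : Fin (n + 1)) (s : ℝ) : ContDiff ℝ 1 (w i s) := by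
    rw [contDiff_euclidean]
    intro j
    induction j using i.succAboveCases with
    | x => simpa [w] using contDiff_const
    | p j => simpa [w] using contDiff_apply ℝ ℝ j
  have hw0 (i : Fin (n + 1)) (s : ℝ) (hs : s ≠ 0) (t : Fin n → ℝ) : w i s t ≠ 0 := fun h ↦
    hs (by simpa [w] using congrArg (fun z : EuclideanSpace ℝ (Fin (n + 1)) ↦ z i) h)
  have hf (i : Fin (n + 1)) (s : ℝ) (hs : s ≠ 0) :
      μH[(n : ℝ)] (f i s '' closedBall 0 1) < ⊤ := by
    have hC : ContDiff ℝ 1 (f i s) :=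
      contDiff_const.add (ContDiff.const_smul r ((((hw i s).norm ℝ (hw0 i s hs)).inv
        fun t ↦ norm_ne_zero_iff.mpr (hw0 i s hs t)).fun_smul (hw i s)))
    obtain ⟨K, hK⟩ := LocallyLipschitzOn.exists_lipschitzOnWith_of_compact
      (isCompact_closedBall (0 : Fin n → ℝ) 1) (hC.locallyLipschitz.locallyLipschitzOn)
    refine (hK.hausdorffMeasure_image_le n.cast_nonneg).trans_lt ?_
    have hvol : (μH[(n : ℝ)] : Measure (Fin n → ℝ)) = volume := by
      simpa using hausdorffMeasure_pi_real (ι := Fin n)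
    rw [hvol, ENNReal.rpow_natCast]
    exact ENNReal.mul_lt_top (ENNReal.pow_lt_top ENNReal.coe_lt_top) measure_closedBall_lt_top
  have hcover : sphere x r ⊆
      ⋃ i, (f i 1 '' closedBall 0 1 ∪ f i (-1) '' closedBall 0 1) := by
    intro y hy
    have hz : ‖y - x‖ = r := by simpa [dist_eq_norm] using hy
    obtain ⟨i, hi⟩ := Finite.exists_max fun i ↦ |(y - x) i|
    have hi0 : 0 < |(y - x) i| := by
      by_contra! h
      have : y - x = 0 := by
        ext j
        exact abs_nonpos_iff.mp ((hi j).trans h)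
      rw [this, norm_zero] at hz
      exact hr.ne hz
    set c := |(y - x) i| with hc
    let t : Fin n → ℝ := fun j ↦ c⁻¹ * (y - x) (i.succAbove j)
    have ht : t ∈ closedBall (0 : Fin n → ℝ) 1 := by
      rw [mem_closedBall_zero_iff, pi_norm_le_iff_of_nonneg zero_le_one]
      intro j
      rw [Real.norm_eq_abs, abs_mul, abs_inv, abs_of_pos hi0, inv_mul_le_one₀ hi0]
      exact hi _
    have key (s : ℝ) (hs : (y - x) i = s * c) : f i s t = y := by
      have hwt : w i s t = c⁻¹ • (y - x) := by
        ext j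
        induction j using i.succAboveCases with
        | x =>
          simp only [w, Fin.insertNth_apply_same, PiLp.smul_apply, smul_eq_mul, hs]
          field_simp
        | p j => simp [w, t]
      simp only [f, hwt, norm_smul, norm_inv, Real.norm_eq_abs, abs_of_pos hi0, hz, smul_smul]
      rw [show r * (c⁻¹ * r)⁻¹ * c⁻¹ = 1 by field_simp, one_smul, add_sub_cancel]
    refine mem_iUnion.mpr ⟨i, ?_⟩
    rcases abs_choice ((y - x) i) with h | h
    · exact Or.inl ⟨t, ht, key 1 (by rw [hc, h, one_mul])⟩
    · exact Or.inr ⟨t, ht, key (-1) (by rw [hc, h]; ring)⟩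
  refine (measure_mono hcover).trans_lt ?_
  refine (measure_iUnion_fintype_le _ _).trans_lt (ENNReal.sum_lt_top.mpr fun i _ ↦ ?_)
  exact (measure_union_le _ _).trans_lt
    (ENNReal.add_lt_top.mpr ⟨hf i 1 one_ne_zero, hf i (-1) (by norm_num)⟩)

theorem hausdorffMeasure_hemisphere_pos {n : ℕ} (x : EuclideanSpace ℝ (Fin (n + 1))) {r : ℝ}
    (hr : 0 < r) : 0 < μH[(n : ℝ)] {y ∈ sphere x r | x 0 < y 0} := by
  let g : EuclideanSpace ℝ (Fin (n + 1)) → Fin n → ℝ := fun y i ↦ y i.succ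
  have hg : LipschitzWith 1 g := by
    refine LipschitzWith.of_dist_le_mul fun y z ↦ ?_
    rw [NNReal.coe_one, one_mul, dist_pi_le_iff dist_nonneg]
    intro i
    simpa [dist_eq_norm, g] using PiLp.norm_apply_le (y - z) i.succ
  let V : Set (Fin n → ℝ) := {t | ∑ i, (t i - x i.succ) ^ 2 < r ^ 2}
  have hV : IsOpen V := isOpen_lt (by fun_prop) continuous_const
  have hVne : V.Nonempty := ⟨fun i ↦ x i.succ, by simpa [V] using pow_pos hr 2⟩
  have hsub : V ⊆ g '' {y ∈ sphere x r | x 0 < y 0} := by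
    intro t ht
    have hpos : 0 < r ^ 2 - ∑ i, (t i - x i.succ) ^ 2 := sub_pos.mpr ht
    refine ⟨WithLp.toLp 2
      (Fin.cons (x 0 + √(r ^ 2 - ∑ i, (t i - x i.succ) ^ 2)) t), ⟨?_, ?_⟩, ?_⟩
    · rw [mem_sphere, EuclideanSpace.dist_eq, Fin.sum_univ_succ]
      simp [Real.dist_eq, sq_abs, Real.sq_sqrt hpos.le, Real.sqrt_sq hr.le]
    · simpa using hpos
    · ext i
      simp [g]
  have hvol : (μH[(n : ℝ)] : Measure (Fin n → ℝ)) = volume := by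
    simpa using hausdorffMeasure_pi_real (ι := Fin n)
  calc 0 < μH[(n : ℝ)] V := by rw [hvol]; exact hV.measure_pos volume hVne
    _ ≤ μH[(n : ℝ)] (g '' {y ∈ sphere x r | x 0 < y 0}) := measure_mono hsub
    _ ≤ μH[(n : ℝ)] {y ∈ sphere x r | x 0 < y 0} := by
      simpa using hg.hausdorffMeasure_image_le n.cast_nonneg {y ∈ sphere x r | x 0 < y 0}

theorem UpperSemicontinuousOn.aemeasurable_restrict {X : Type*} [TopologicalSpace X]
    [MeasurableSpace X] [BorelSpace X] {μ : Measure X} {v : X → EReal} {s : Set X}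
    (hv : UpperSemicontinuousOn v s) (hs : MeasurableSet s) : AEMeasurable v (μ.restrict s) :=
  (aemeasurable_restrict_iff_comap_subtype hs).mpr
    (upperSemicontinuousOn_iff_restrict.mpr hv).measurable.aemeasurable

theorem average_lt_of_ae_le_of_measure_lt_pos {X : Type*} [MeasurableSpace X] {μ : Measure X}
    [IsFiniteMeasure μ] {f : X → ℝ} {m : ℝ} (hf : Integrable f μ) (hle : ∀ᵐ y ∂μ, f y ≤ m)
    (hlt : 0 < μ {y | f y < m}) : ⨍ y, f y ∂μ < m := by
  have hμ : 0 < μ.real univ :=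
    ENNReal.toReal_pos (hlt.trans_le (measure_mono (subset_univ _))).ne' (measure_ne_top _ _)
  have hpos : 0 < ∫ y, (m - f y) ∂μ := by
    rw [integral_pos_iff_support_of_nonneg_ae (hle.mono fun y hy ↦ sub_nonneg.mpr hy)
      ((integrable_const m).sub hf)]
    exact hlt.trans_le (measure_mono fun y hy ↦ (sub_pos.mpr hy).ne')
  rw [integral_sub (integrable_const m) hf, integral_const, smul_eq_mul] at hpos
  rw [average_eq, smul_eq_mul, inv_mul_lt_iff₀ hμ]
  linarith

theorem sphereMean_lt {n : ℕ} {v : EuclideanSpace ℝ (Fin (n + 1)) → EReal}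
    {x : EuclideanSpace ℝ (Fin (n + 1))} {r m : ℝ} (hr : 0 < r)
    (hv : UpperSemicontinuousOn v (sphere x r)) (hle : ∀ y ∈ sphere x r, v y ≤ m)
    (hlt : ∀ y ∈ sphere x r, x 0 < y 0 → v y < m) : sphereMean n v x r < m := by
  obtain ⟨N, hN⟩ := exists_nat_gt (-m)
  have hNm : (-(N : ℝ) : EReal) < m := by
    rw [← EReal.coe_neg]
    exact EReal.coe_lt_coe_iff.mpr (by linarith)
  have hNbot : (-(N : ℝ) : EReal) ≠ ⊥ := by
    rw [← EReal.coe_neg]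
    exact EReal.coe_ne_bot _
  refine (iInf_le _ N).trans_lt (EReal.coe_lt_coe_iff.mpr ?_)
  have hS : MeasurableSet (sphere x r) := isClosed_sphere.measurableSet
  have : IsFiniteMeasure ((μH[(n : ℝ)] : Measure _).restrict (sphere x r)) :=
    ⟨by simpa using hausdorffMeasure_sphere_lt_top x hr⟩
  have hup (y) (hy : y ∈ sphere x r) : (v y ⊔ (-(N : ℝ) : EReal)).toReal ≤ m :=
    EReal.toReal_le_toReal (sup_le (hle y hy) hNm.le)
      (ne_bot_of_le_ne_bot hNbot le_sup_right) (EReal.coe_ne_top m)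
  have hlow (y) (hy : y ∈ sphere x r) : -(N : ℝ) ≤ (v y ⊔ (-(N : ℝ) : EReal)).toReal := by
    simpa [← EReal.coe_neg, -EReal.coe_natCast] using
      EReal.toReal_le_toReal (le_sup_right : (-(N : ℝ) : EReal) ≤ v y ⊔ _) hNbot
      (((sup_le (hle y hy) hNm.le).trans_lt (EReal.coe_lt_top m)).ne)
  refine average_lt_of_ae_le_of_measure_lt_pos ?_ (ae_restrict_of_forall_mem hS hup) ?_
  · refine Integrable.of_mem_Icc (-(N : ℝ)) m ?_
      (ae_restrict_of_forall_mem hS fun y hy ↦ ⟨hlow y hy, hup y hy⟩)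
    exact ((hv.aemeasurable_restrict hS).sup aemeasurable_const).ereal_toReal
  · refine (hausdorffMeasure_hemisphere_pos x hr).trans_le ?_
    rw [Measure.restrict_apply' hS]
    refine measure_mono fun y hy ↦ ⟨?_, hy.1⟩
    have h := sup_lt_iff.mpr ⟨hlt y hy.1 hy.2, hNm⟩
    exact EReal.coe_lt_coe_iff.mp
      (by rwa [EReal.coe_toReal (h.trans (EReal.coe_lt_top m)).ne
        (ne_bot_of_le_ne_bot hNbot le_sup_right)])

/-- The maximum principle for subharmonic functions on a bounded open set. -/
theorem IsSubharmonicOn.le_of_le_on_frontier {p : ℕ} (hp : 1 ≤ p)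
    {v : EuclideanSpace ℝ (Fin p) → EReal} {U Ω : Set (EuclideanSpace ℝ (Fin p))}
    (hv : IsSubharmonicOn ((p : ℝ) - 1) v U) (hΩ : IsOpen Ω) (hb : Bornology.IsBounded Ω)
    (hU : closure Ω ⊆ U) {M : ℝ} (hM : ∀ ζ ∈ frontier Ω, v ζ ≤ M) :
    ∀ x ∈ closure Ω, v x ≤ M := by
  obtain ⟨n, rfl⟩ := Nat.exists_eq_add_of_le' hp
  rw [Nat.cast_add_one, add_sub_cancel_right] at hv
  obtain ⟨husc, htop, -, hmean⟩ := hv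
  have husc := husc.mono hU
  have hK : IsCompact (closure Ω) := hb.isCompact_closure
  by_contra! h
  obtain ⟨x₀, hx₀, hx₀M⟩ := h
  obtain ⟨z, hz, hmax⟩ := husc.exists_isMaxOn ⟨x₀, hx₀⟩ hK
  have hzM : (M : EReal) < v z := hx₀M.trans_le (hmax hx₀)
  obtain ⟨x, ⟨hx, hxz⟩, hx0⟩ := (husc.isCompact_inter_preimage_Ici hK (v z)).exists_isMaxOn
    ⟨z, hz, le_refl (v z)⟩
    (f := fun y : EuclideanSpace ℝ (Fin (n + 1)) ↦ y 0) (by fun_prop)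
  have hxeq : v x = v z := le_antisymm (hmax hx) hxz
  have hxΩ : x ∈ Ω := by
    by_contra hxn
    exact (hzM.trans_le hxz).not_ge (hM x ⟨hx, by rwa [hΩ.interior_eq]⟩)
  obtain ⟨r, hr, hball⟩ := nhds_basis_closedBall.mem_iff.mp (hΩ.mem_nhds hxΩ)
  have hballc := hball.trans subset_closure
  have hsph : sphere x r ⊆ closure Ω := sphere_subset_closedBall.trans hballc
  have hcoe : ((v z).toReal : EReal) = v z :=
    EReal.coe_toReal (htop z (hU hz)).ne ((EReal.bot_lt_coe M).trans hzM).ne'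
  have hlt : sphereMean n v x r < ((v z).toReal : EReal) := by
    refine sphereMean_lt hr (husc.mono hsph) ?_ ?_ <;> rw [hcoe]
    · exact fun y hy ↦ hmax (hsph hy)
    · intro y hy hxy
      refine lt_of_not_ge fun hge ↦ hxy.not_ge (hx0 ⟨hsph hy, hge⟩)
  exact (hmean x r hr (hballc.trans hU)).not_gt (by rwa [hxeq, ← hcoe])

theorem closure_prodSet {p q : ℕ} (Ω₁ : Set (EuclideanSpace ℝ (Fin p)))
    (Ω₂ : Set (EuclideanSpace ℝ (Fin q))) :
    closure (prodSet Ω₁ Ω₂) = prodSet (closure Ω₁) (closure Ω₂) := by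
  unfold prodSet
  rw [← closure_prod_eq]
  exact ((WithLp.homeomorphProd 2 _ _).preimage_closure _).symm

/-- maximum principle relative to the distinguished boundary for
separately subharmonic functions. -/
theorem separately_subharmonic_le_of_le_on_distinguished_boundary
    (p q : ℕ) (hp : 2 ≤ p) (hq : 2 ≤ q)
    (Ω₁ : Set (EuclideanSpace ℝ (Fin p))) (Ω₂ : Set (EuclideanSpace ℝ (Fin q)))
    (hΩ₁open : IsOpen Ω₁) (hΩ₂open : IsOpen Ω₂)
    (hΩ₁conn : IsConnected Ω₁) (hΩ₂conn : IsConnected Ω₂)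
    (hΩ₁bdd : Bornology.IsBounded Ω₁) (hΩ₂bdd : Bornology.IsBounded Ω₂)
    (U : Set (ProdSpace p q)) (hUopen : IsOpen U)
    (hUnbhd : closure (prodSet Ω₁ Ω₂) ⊆ U)
    (u : ProdSpace p q → EReal) (hu : SeparatelySubharmonicOn u U)
    (M : ℝ) (hM : ∀ ζ ∈ frontier Ω₁, ∀ η ∈ frontier Ω₂, u (prodMk ζ η) ≤ (M : EReal)) :
    ∀ z ∈ closure (prodSet Ω₁ Ω₂), u z ≤ (M : EReal) := by
  rw [closure_prodSet] at hUnbhd ⊢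
  have hmem {a b} (ha : a ∈ closure Ω₁) (hb : b ∈ closure Ω₂) : prodMk a b ∈ U := hUnbhd ⟨ha, hb⟩
  have hside (ζ) (hζ : ζ ∈ frontier Ω₁) (y) (hy : y ∈ closure Ω₂) : u (prodMk ζ y) ≤ M :=
    have hζ' := frontier_subset_closure hζ
    (hu ζ y (hmem hζ' hy)).2.le_of_le_on_frontier (one_le_two.trans hq) hΩ₂open hΩ₂bdd
      (fun _ hb ↦ hmem hζ' hb) (hM ζ hζ) y hy
  rintro z ⟨hz₁, hz₂⟩
  exact (hu z.fst z.snd (hmem hz₁ hz₂)).1.le_of_le_on_frontier (one_le_two.trans hp)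
    hΩ₁open hΩ₁bdd (fun _ ha ↦ hmem ha hz₂) (fun ζ hζ ↦ hside ζ hζ z.snd hz₂) z.fst hz₁
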